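/- There exists a function c : ℕ → ℝ such that: (1) for every integer n ≥ 4, 0 < c(n) < n/2 − 1 and for all real γ with 0 < γ < n/2 − 1 the inequality Ξ(n,γ) < ((n+2γ)/(n−2γ)) · Q(n,γ) holds if and only if γ < c(n); (2) c(n) < c(n+1) for every integer n ≥ 4; and (3) the sequence n ↦ (n/2 − 1 − c(n)) tends to 0 as n → ∞. -/

import Mathlib

/-- `Ξ(n,γ) = 4^γ · Γ(n/4+γ/2−1/4)² / Γ(n/4−γ/2−1/4)²`. -/
noncomputable def Xi (n : ℤ) (γ : ℝ) : ℝ :=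
  (4 : ℝ) ^ γ * Real.Gamma ((n : ℝ) / 4 + γ / 2 - 1 / 4) ^ 2 /
    Real.Gamma ((n : ℝ) / 4 - γ / 2 - 1 / 4) ^ 2

/-- The fractional curvature `Q_γ(n,1)` of the trivial solution on `Sⁿ∖S¹`. -/
noncomputable def Qcurv (n : ℤ) (γ : ℝ) : ℝ :=
  (4 : ℝ) ^ γ * Real.Gamma (((n : ℝ) + 2 * γ) / 4) * Real.Gamma (((n : ℝ) - 2 + 2 * γ) / 4) /
    (Real.Gamma (((n : ℝ) - 2 * γ) / 4) * Real.Gamma (((n : ℝ) - 2 - 2 * γ) / 4))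

/-!
Put `b = (n - 2γ) / 4` and `a = (n + 2γ) / 4`, so that `a + b = s := n / 2`. Taking logarithms, the
inequality becomes `L a < L b` with `L x = 2 log Γ(x - 1/4) - log Γ(x + 1) - log Γ(x - 1/2)`, and
`γ` is small exactly when `b` is close to `s / 2`. The function `L` decreases on `[7/8, ∞)`, so the
inequality holds whenever `b ≥ 7/8`. For `b ≤ 7/8`, `L x + x² / 2` is concave on `(1/2, 7/8]` and
convex on `[9/8, ∞)`; since `s - b ≥ 9/8`, the quadratic terms combine to an affine function and
`b ↦ L b - L (s - b)` is concave. It tends to `-∞` at `1/2` and is positive at `7/8`, so it changes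
sign exactly once, at some `β(s)`, and `c n = n / 2 - 2 β(n / 2)`. Since `L (s - b)` decreases to
`-∞` as `s → ∞`, `β` is antitone with limit `1/2`.
-/

open Real Set Filter Topology

section Convexity

lemma convexOn_of_tendsto_sum {s : Set ℝ} (hs : Convex ℝ s) {g : ℕ → ℝ → ℝ} {a : ℕ → ℝ}
    {f : ℝ → ℝ} (hg : ∀ m, ConvexOn ℝ s (g m))
    (hf : ∀ x ∈ s, Tendsto (fun N ↦ a N + ∑ m ∈ Finset.range (N + 1), g m x) atTop (𝓝 (f x))) :
    ConvexOn ℝ s f := by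
  have hpartial (N : ℕ) :
      ConvexOn ℝ s fun x ↦ a N + ∑ m ∈ Finset.range (N + 1), g m x := by
    have hsum := Finset.sum_induction g (ConvexOn ℝ s) (fun _ _ ↦ ConvexOn.add)
      (convexOn_const 0 hs) (s := Finset.range (N + 1)) fun m _ ↦ hg m
    simpa only [Pi.add_def, Finset.sum_apply] using (convexOn_const (a N) hs).add hsum
  refine ⟨hs, fun x hx y hy u v hu hv huv ↦ ?_⟩
  exact le_of_tendsto_of_tendsto' (hf _ (hs hx hy hu hv huv))
    (((hf x hx).const_smul u).add ((hf y hy).const_smul v))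
    fun N ↦ (hpartial N).2 hx hy hu hv huv

lemma convexOn_sum_log_add_sq {ι : Type*} {t : Finset ι} {w p : ι → ℝ} {k : ℝ} {s : Set ℝ}
    (hs : Convex ℝ s) (hp : ∀ i ∈ t, ∀ x ∈ s, 0 < x + p i)
    (hk : ∀ x ∈ s, ∑ i ∈ t, w i / (x + p i) ^ 2 ≤ k) :
    ConvexOn ℝ s fun x ↦ ∑ i ∈ t, w i * log (x + p i) + k / 2 * x ^ 2 := by
  have hderiv {x : ℝ} (hx : x ∈ s) :
      HasDerivAt (fun x ↦ ∑ i ∈ t, w i * log (x + p i) + k / 2 * x ^ 2)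
        (∑ i ∈ t, w i / (x + p i) + k * x) x := by
    refine .add (.fun_sum fun i hi ↦ ?_) ?_
    · simpa only [id, mul_one_div] using
        (((hasDerivAt_id x).add_const (p i)).log (hp i hi x hx).ne').const_mul (w i)
    · exact ((hasDerivAt_pow 2 x).const_mul (k / 2)).congr_deriv (by push_cast; ring)
  have hderiv2 {x : ℝ} (hx : x ∈ s) :
      HasDerivAt (fun x ↦ ∑ i ∈ t, w i / (x + p i) + k * x)
        (k - ∑ i ∈ t, w i / (x + p i) ^ 2) x := by
    have hsum : HasDerivAt (fun x ↦ ∑ i ∈ t, w i / (x + p i))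
        (∑ i ∈ t, -(w i / (x + p i) ^ 2)) x := .fun_sum fun i hi ↦
      ((hasDerivAt_const x (w i)).div ((hasDerivAt_id x).add_const (p i))
        (hp i hi x hx).ne').congr_deriv (by simp [neg_div])
    refine (hsum.add ((hasDerivAt_id x).const_mul k)).congr_deriv ?_
    rw [Finset.sum_neg_distrib]
    ring
  exact convexOn_of_hasDerivWithinAt2_nonneg hs
    (fun x hx ↦ (hderiv hx).continuousAt.continuousWithinAt)
    (fun x hx ↦ (hderiv (interior_subset hx)).hasDerivWithinAt)
    (fun x hx ↦ (hderiv2 (interior_subset hx)).hasDerivWithinAt)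
    (fun x hx ↦ sub_nonneg.2 (hk x (interior_subset hx)))

lemma pos_iff_lt_of_concaveOn {f : ℝ → ℝ} {s : Set ℝ} (hf : ConcaveOn ℝ s f) {β c x : ℝ}
    (hβ : β ∈ s) (hc : c ∈ s) (hx : x ∈ s) (hβc : β < c) (hxc : x ≤ c) (hfβ : f β = 0)
    (hfc : 0 < f c) : 0 < f x ↔ β < x := by
  constructor
  · contrapose!
    intro hxβ
    rcases hxβ.eq_or_lt with rfl | hxβ
    · exact hfβ.le
    · have hmem : β ∈ openSegment ℝ x c := Ioo_subset_openSegment ⟨hxβ, hβc⟩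
      exact hfβ ▸ (hf.left_lt_of_lt_right hx hc hmem (hfβ ▸ hfc)).le
  · intro hβx
    rcases hxc.eq_or_lt with rfl | hxc
    · exact hfc
    · by_contra! hfx
      have hmem : x ∈ openSegment ℝ β c := Ioo_subset_openSegment ⟨hβx, hxc⟩
      have := hf.left_lt_of_lt_right hβ hc hmem (hfx.trans_lt hfc)
      linarith

end Convexity

section LogGamma

lemma log_Gamma_add_one {x : ℝ} (hx : 0 < x) :
    log (Gamma (x + 1)) = log x + log (Gamma x) := by
  rw [Gamma_add_one hx.ne', log_mul hx.ne' (Gamma_pos_of_pos hx).ne']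

lemma continuousAt_log_Gamma {x : ℝ} (hx : 0 < x) : ContinuousAt (fun y ↦ log (Gamma y)) x :=
  (differentiableOn_Gamma_Ioi.continuousOn.continuousAt (Ioi_mem_nhds hx)).log
    (Gamma_pos_of_pos hx).ne'

lemma two_mul_log_Gamma_le {x d : ℝ} (h₁ : 0 < x + d) (h₂ : 0 < x - d) :
    2 * log (Gamma x) ≤ log (Gamma (x + d)) + log (Gamma (x - d)) := by
  have h := convexOn_log_Gamma.2 (mem_Ioi.2 h₁) (mem_Ioi.2 h₂) (one_half_pos (α := ℝ)).le
    one_half_pos.le (add_halves 1)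
  have hmid : 1 / 2 * (x + d) + 1 / 2 * (x - d) = x := by ring
  simp only [smul_eq_mul, Function.comp_apply, hmid] at h
  linarith

lemma tendsto_sum_log_log_Gamma {p q r : ℝ} (hp : 0 < p) (hq : 0 < q) (hr : 0 < r) :
    Tendsto (fun N : ℕ ↦ (2 * r - p - q) * log N +
        ∑ m ∈ Finset.range (N + 1), (log (p + m) + log (q + m) - 2 * log (r + m)))
      atTop (𝓝 (2 * log (Gamma r) - log (Gamma p) - log (Gamma q))) := by
  refine (((BohrMollerup.tendsto_log_gamma hr).const_mul 2).sub
    (BohrMollerup.tendsto_log_gamma hp) |>.sub (BohrMollerup.tendsto_log_gamma hq)).congr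
    fun N ↦ ?_
  simp only [BohrMollerup.logGammaSeq, Finset.sum_add_distrib, Finset.sum_sub_distrib,
    ← Finset.mul_sum]
  ring

lemma two_div_sq_le {x d : ℝ} (hd : |d| < x) :
    2 / x ^ 2 ≤ 1 / (x + d) ^ 2 + 1 / (x - d) ^ 2 := by
  obtain ⟨h₁, h₂⟩ := abs_lt.1 hd
  have hx : 0 < x := by linarith
  have hadd : 0 < x + d := by linarith
  have : 0 < x - d := by linarith
  have hsq : d ^ 2 ≤ x ^ 2 := sq_le_sq' h₁.le h₂.le
  rw [div_add_div _ _ (by positivity) (by positivity),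
    div_le_div_iff₀ (by positivity) (by positivity)]
  nlinarith [mul_nonneg (sq_nonneg d) (sub_nonneg.2 hsq), mul_nonneg (sq_nonneg d) (sq_nonneg x)]

lemma convexOn_two_mul_log_sub_log_add_sub_log_sub (d : ℝ) :
    ConvexOn ℝ (Ioi |d|) fun x ↦ 2 * log x - log (x + d) - log (x - d) := by
  have h := convexOn_sum_log_add_sq (t := Finset.univ) (w := ![2, -1, -1])
    (p := ![0, d, -d]) (k := 0) (convex_Ioi |d|)
    (by
      intro i _ x hx
      have := abs_lt.1 (mem_Ioi.1 hx)
      fin_cases i <;> dsimp <;> linarith)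
    (by
      intro x hx
      have := two_div_sq_le (mem_Ioi.1 hx)
      simp only [Fin.sum_univ_three, Matrix.cons_val, neg_div, add_zero, ← sub_eq_add_neg] at this ⊢
      linarith)
  refine h.congr fun x _ ↦ ?_
  simp only [Fin.sum_univ_three, Matrix.cons_val]
  ring_nf

lemma convexOn_log_Gamma_second_difference (d : ℝ) :
    ConvexOn ℝ (Ioi |d|) fun x ↦
      log (Gamma (x + d)) + log (Gamma (x - d)) - 2 * log (Gamma x) := by
  refine convexOn_of_tendsto_sum (convex_Ioi _) (a := 0)
    (g := fun m x ↦ 2 * log (x + m) - log (x + m + d) - log (x + m - d)) (fun m ↦ ?_)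
    fun x hx ↦ ?_
  · exact ((convexOn_two_mul_log_sub_log_add_sub_log_sub d).translate_left (m : ℝ)).subset
      (fun x hx ↦ (mem_Ioi.1 hx).trans_le (by simp)) (convex_Ioi _)
  · obtain ⟨h₁, h₂⟩ := abs_lt.1 (mem_Ioi.1 hx)
    have hlim := (tendsto_sum_log_log_Gamma (p := x + d) (q := x - d) (r := x)
      (by linarith) (by linarith) (by linarith)).neg
    convert hlim using 2 with N
    · rw [neg_add, ← Finset.sum_neg_distrib]
      congr 1
      · rw [Pi.zero_apply]
        ring
      · exact Finset.sum_congr rfl fun m _ ↦ by ring_nf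
    · ring

end LogGamma

/-- The `m`-th term, at `y = x + m`, of the series for `logGammaRatio x` that Gauss's product
formula for `Γ` yields. -/
noncomputable def logTerm (y : ℝ) : ℝ := log (y + 1) + log (y - 1 / 2) - 2 * log (y - 1 / 4)

/-- The logarithm of `Γ(x - 1/4)² / (Γ(x + 1) Γ(x - 1/2))` for `x > 1/2`. Comparing its values at
`(n + 2γ) / 4` and `(n - 2γ) / 4` decides the inequality between `Xi` and `Qcurv`. -/
noncomputable def logGammaRatio (x : ℝ) : ℝ :=
  2 * log (Gamma (x - 1 / 4)) - log (Gamma (x + 1)) - log (Gamma (x - 1 / 2))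

section LogGammaRatio

lemma tendsto_sum_logTerm {x : ℝ} (hx : 1 / 2 < x) :
    Tendsto (fun N : ℕ ↦ -log N + ∑ m ∈ Finset.range (N + 1), logTerm (x + m)) atTop
      (𝓝 (logGammaRatio x)) := by
  refine (tendsto_sum_log_log_Gamma (p := x + 1) (q := x - 1 / 2) (r := x - 1 / 4)
    (by linarith) (by linarith) (by linarith)).congr fun N ↦ ?_
  congr 1
  · ring
  · refine Finset.sum_congr rfl fun m _ ↦ ?_
    rw [logTerm, add_right_comm x 1, sub_add_eq_add_sub x, sub_add_eq_add_sub x]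

lemma logGammaRatio_eq_add {x : ℝ} (hx : 1 / 2 < x) :
    logGammaRatio x = logTerm x + logGammaRatio (x + 1) := by
  have h₁ := log_Gamma_add_one (x := x - 1 / 4) (by linarith)
  have h₂ := log_Gamma_add_one (x := x + 1) (by linarith)
  have h₃ := log_Gamma_add_one (x := x - 1 / 2) (by linarith)
  rw [sub_add_eq_add_sub] at h₁ h₃
  rw [logGammaRatio, logGammaRatio, logTerm, h₁, h₂, h₃]
  ring

lemma logTerm_eq_log {y : ℝ} (hy : 1 / 2 < y) :
    logTerm y = log (1 + (y - 1 / 4)⁻¹ - 5 / 16 * (y - 1 / 4)⁻¹ ^ 2) := by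
  have h₁ : y + 1 ≠ 0 := by linarith
  have h₂ : y - 1 / 2 ≠ 0 := by linarith
  have h₃ : y - 1 / 4 ≠ 0 := by linarith
  rw [logTerm, ← log_mul h₁ h₂, two_mul, ← log_mul h₃ h₃,
    ← log_div (mul_ne_zero h₁ h₂) (mul_ne_zero h₃ h₃)]
  congr 1
  generalize hu : y - 1 / 4 = u at h₃ ⊢
  have e₁ : y + 1 = u + 5 / 4 := by linarith
  have e₂ : y - 1 / 2 = u - 1 / 4 := by linarith
  rw [e₁, e₂]
  field_simp
  ring

lemma logTerm_strictAntiOn : StrictAntiOn logTerm (Ici (7 / 8)) := by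
  intro x hx y hy hxy
  rw [mem_Ici] at hx hy
  rw [logTerm_eq_log (by linarith), logTerm_eq_log (by linarith)]
  have hpos : 0 < (y - 1 / 4)⁻¹ := inv_pos.2 (by linarith)
  -- `1 + v - 5/16 v²` increases for `v ≤ 8/5`, which is where the endpoint `7/8` comes from.
  have hlt : (y - 1 / 4)⁻¹ < (x - 1 / 4)⁻¹ := inv_strictAnti₀ (by linarith) (by linarith)
  have hle : (x - 1 / 4)⁻¹ ≤ 8 / 5 := inv_le_of_inv_le₀ (by norm_num) (by linarith)
  exact log_lt_log (by nlinarith) (by nlinarith)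

lemma logGammaRatio_strictAntiOn : StrictAntiOn logGammaRatio (Ici (7 / 8)) := by
  have hanti : AntitoneOn logGammaRatio (Ici (7 / 8)) := by
    intro x hx y hy hxy
    rw [mem_Ici] at hx hy
    refine le_of_tendsto_of_tendsto' (tendsto_sum_logTerm (by linarith))
      (tendsto_sum_logTerm (by linarith)) fun N ↦ ?_
    gcongr with m
    have : (0 : ℝ) ≤ m := m.cast_nonneg
    exact logTerm_strictAntiOn.antitoneOn (mem_Ici.2 (by linarith)) (mem_Ici.2 (by linarith))
      (by gcongr)
  intro x hx y hy hxy
  rw [mem_Ici] at hx hy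
  rw [logGammaRatio_eq_add (x := x) (by linarith), logGammaRatio_eq_add (x := y) (by linarith)]
  exact add_lt_add_of_lt_of_le (logTerm_strictAntiOn hx hy hxy)
    (hanti (mem_Ici.2 (by linarith)) (mem_Ici.2 (by linarith)) (by gcongr))

lemma convexOn_logTerm_add_sq {a k : ℝ} (ha : 1 / 2 < a)
    (hk : ∀ x ≥ a, 1 / (x + 1) ^ 2 + 1 / (x - 1 / 2) ^ 2 - 2 / (x - 1 / 4) ^ 2 ≤ k) :
    ConvexOn ℝ (Ici a) fun x ↦ logTerm x + k / 2 * x ^ 2 := by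
  have h := convexOn_sum_log_add_sq (t := Finset.univ) (w := ![1, 1, -2])
    (p := ![1, -(1 / 2), -(1 / 4)]) (k := k) (convex_Ici a)
    (by
      intro i _ x hx
      rw [mem_Ici] at hx
      fin_cases i <;> dsimp <;> linarith)
    (by simpa [Fin.sum_univ_three, neg_div, ← sub_eq_add_neg] using hk)
  refine h.congr fun x _ ↦ ?_
  simp only [Fin.sum_univ_three, Matrix.cons_val, logTerm]
  ring_nf

lemma convexOn_logTerm : ConvexOn ℝ (Ici (3 / 2)) logTerm := by
  suffices hk : ∀ x ≥ (3 / 2 : ℝ),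
      1 / (x + 1) ^ 2 + 1 / (x - 1 / 2) ^ 2 - 2 / (x - 1 / 4) ^ 2 ≤ 0 by
    simpa using convexOn_logTerm_add_sq (by norm_num) hk
  intro x hx
  obtain ⟨t, ht, rfl⟩ : ∃ t ≥ 0, x = t + 3 / 2 := ⟨x - 3 / 2, by linarith, by ring⟩
  have h₁ : t + 3 / 2 + 1 = t + 5 / 2 := by ring
  have h₂ : t + 3 / 2 - 1 / 2 = t + 1 := by ring
  have h₃ : t + 3 / 2 - 1 / 4 = t + 5 / 4 := by ring
  rw [h₁, h₂, h₃, sub_nonpos, div_add_div _ _ (by positivity) (by positivity),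
    div_le_div_iff₀ (by positivity) (by positivity), ← sub_nonneg]
  ring_nf
  positivity

lemma convexOn_logTerm_add_half_sq :
    ConvexOn ℝ (Ici (9 / 8)) fun x ↦ logTerm x + 1 / 2 * x ^ 2 := by
  refine convexOn_logTerm_add_sq (by norm_num) fun x hx ↦ ?_
  have hsub : 0 < x - 1 / 2 := by linarith
  have hsub' : 0 < x - 1 / 4 := by linarith
  have hadd : (x + 1)⁻¹ ≤ 8 / 17 := inv_le_of_inv_le₀ (by norm_num) (by linarith)
  have hratio : 5 / 7 * (x - 1 / 2)⁻¹ ≤ (x - 1 / 4)⁻¹ := by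
    rw [← div_eq_mul_inv, ← one_div, div_le_div_iff₀ hsub hsub']
    linarith
  have hsq_nonneg : 0 ≤ (x - 1 / 2)⁻¹ ^ 2 := sq_nonneg _
  have hadd_sq := pow_le_pow_left₀ (inv_nonneg.2 (by linarith)) hadd 2
  have hratio_sq := pow_le_pow_left₀ (by positivity) hratio 2
  simp only [div_eq_mul_inv, one_mul, ← inv_pow] at hsq_nonneg hadd_sq hratio_sq ⊢
  linarith

lemma convexOn_logGammaRatio : ConvexOn ℝ (Ici (3 / 2)) logGammaRatio := by
  refine convexOn_of_tendsto_sum (convex_Ici _) (a := fun N ↦ -log N)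
    (g := fun m x ↦ logTerm (x + m)) (fun m ↦ ?_)
    fun x hx ↦ tendsto_sum_logTerm (by linarith [mem_Ici.1 hx])
  exact (convexOn_logTerm.translate_left (m : ℝ)).subset
    (fun x hx ↦ (mem_Ici.1 hx).trans (by simp)) (convex_Ici _)

lemma convexOn_logGammaRatio_add_sq :
    ConvexOn ℝ (Ici (9 / 8)) fun x ↦ logGammaRatio x + 1 / 2 * x ^ 2 := by
  have hshift : ConvexOn ℝ (Ici (9 / 8)) fun x ↦ logGammaRatio (x + 1) :=
    (convexOn_logGammaRatio.translate_left 1).subset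
      (fun x hx ↦ mem_preimage.2 (mem_Ici.2 (by linarith [mem_Ici.1 hx]))) (convex_Ici _)
  refine (convexOn_logTerm_add_half_sq.add hshift).congr fun x hx ↦ ?_
  rw [mem_Ici] at hx
  simp only [Pi.add_apply]
  rw [logGammaRatio_eq_add (x := x) (by linarith)]
  ring

lemma convexOn_two_mul_log_sub_log_sub_sq :
    ConvexOn ℝ (Ioc (1 / 2) (7 / 8))
      fun x ↦ 2 * log (x - 1 / 4) - log (x - 1 / 2) - 1 / 2 * x ^ 2 := by
  have h := convexOn_sum_log_add_sq (t := Finset.univ) (w := ![2, -1])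
    (p := ![-(1 / 4), -(1 / 2)]) (k := -1) (convex_Ioc (1 / 2) (7 / 8))
    (by
      rintro i - x ⟨hx, -⟩
      fin_cases i <;> dsimp <;> linarith)
    (by
      rintro x ⟨hx, hx'⟩
      have hsub : 0 < x - 1 / 2 := by linarith
      have hsub' : 0 < x - 1 / 4 := by linarith
      have hratio : (x - 1 / 4)⁻¹ ≤ 3 / 5 * (x - 1 / 2)⁻¹ := by
        rw [← div_eq_mul_inv, ← one_div, div_le_div_iff₀ hsub' hsub]
        linarith
      have hinv : 8 / 3 ≤ (x - 1 / 2)⁻¹ := (le_inv_comm₀ (by norm_num) hsub).2 (by linarith)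
      have hratio_sq := pow_le_pow_left₀ (by positivity) hratio 2
      have hinv_sq := pow_le_pow_left₀ (by norm_num) hinv 2
      simp only [Fin.sum_univ_two, Matrix.cons_val, div_eq_mul_inv, ← inv_pow,
        ← sub_eq_add_neg] at hratio_sq hinv_sq ⊢
      linarith)
  refine h.congr fun x _ ↦ ?_
  simp only [Fin.sum_univ_two, Matrix.cons_val]
  ring_nf

-- The recurrence for `Γ` at `x - 1/4` and `x - 1/2` splits off the singular logarithms at `1/2` and
-- leaves minus a symmetric second difference of `log Γ` centred at `x + 3/4`, which is concave.
lemma concaveOn_logGammaRatio_add_sq :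
    ConcaveOn ℝ (Ioc (1 / 2) (7 / 8)) fun x ↦ logGammaRatio x + 1 / 2 * x ^ 2 := by
  have hdiff := ((convexOn_log_Gamma_second_difference (1 / 4)).translate_left (3 / 4)).subset
    (fun x (hx : x ∈ Ioc (1 / 2) (7 / 8)) ↦
      mem_preimage.2 (mem_Ioi.2 (abs_lt.2 ⟨by linarith [hx.1], by linarith [hx.1]⟩)))
    (convex_Ioc _ _)
  refine (convexOn_two_mul_log_sub_log_sub_sq.add hdiff).neg.congr fun x ⟨hx, _⟩ ↦ ?_
  have h₁ := log_Gamma_add_one (x := x - 1 / 4) (by linarith)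
  have h₂ := log_Gamma_add_one (x := x - 1 / 2) (by linarith)
  have e₁ : x - 1 / 4 + 1 = x + 3 / 4 := by ring
  have e₂ : x - 1 / 2 + 1 = x + 3 / 4 - 1 / 4 := by ring
  have e₃ : x + 1 = x + 3 / 4 + 1 / 4 := by ring
  rw [e₁] at h₁
  rw [e₂] at h₂
  simp only [Pi.neg_apply, Pi.add_apply, Function.comp_apply, logGammaRatio, e₃, h₁, h₂]
  ring

lemma continuousAt_logGammaRatio {x : ℝ} (hx : 1 / 2 < x) : ContinuousAt logGammaRatio x := by
  have hGamma (c : ℝ) (hc : 0 < x + c) : ContinuousAt (fun y ↦ log (Gamma (y + c))) x :=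
    (continuousAt_log_Gamma hc).comp' (f := fun y ↦ y + c) (by fun_prop)
  exact (((hGamma _ (by linarith)).const_mul 2).sub (hGamma _ (by linarith))).sub
    (hGamma _ (by linarith))

lemma tendsto_logGammaRatio_nhdsGT : Tendsto logGammaRatio (𝓝[>] (1 / 2)) atBot := by
  have hlog : Tendsto (fun x : ℝ ↦ log (x - 1 / 2)) (𝓝[>] (1 / 2)) atBot := by
    refine tendsto_log_nhdsGT_zero.comp (tendsto_nhdsWithin_iff.2 ⟨?_, ?_⟩)
    · exact (Continuous.tendsto' (continuous_sub_right _) _ _ (sub_self _)).mono_left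
        nhdsWithin_le_nhds
    · filter_upwards [self_mem_nhdsWithin] with x hx using mem_Ioi.2 (sub_pos.2 hx)
  have hrest : ContinuousAt
      (fun x ↦ log (x + 1) - 2 * log (x - 1 / 4) + logGammaRatio (x + 1)) (1 / 2) := by
    have : ContinuousAt (fun x ↦ logGammaRatio (x + 1)) (1 / 2) :=
      (continuousAt_logGammaRatio (by norm_num)).comp' (by fun_prop)
    fun_prop (disch := norm_num)
  refine (hlog.atBot_add (hrest.mono_left nhdsWithin_le_nhds)).congr' ?_
  filter_upwards [self_mem_nhdsWithin] with x hx
  rw [logGammaRatio_eq_add hx, logTerm]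
  ring

lemma logGammaRatio_le {x : ℝ} (hx : 1 / 2 < x) : logGammaRatio x ≤ -log x := by
  have h := two_mul_log_Gamma_le (x := x - 1 / 4) (d := 1 / 4) (by linarith) (by linarith)
  have e₁ : x - 1 / 4 + 1 / 4 = x := by ring
  have e₂ : x - 1 / 4 - 1 / 4 = x - 1 / 2 := by ring
  rw [e₁, e₂] at h
  rw [logGammaRatio, log_Gamma_add_one (by linarith)]
  linarith

lemma tendsto_logGammaRatio_atTop : Tendsto logGammaRatio atTop atBot :=
  tendsto_atBot_mono' atTop
    ((eventually_gt_atTop (1 / 2)).mono fun _ hx ↦ logGammaRatio_le hx)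
    (tendsto_neg_atTop_atBot.comp tendsto_log_atTop)

end LogGammaRatio

section Crossing

lemma concaveOn_logGammaRatio_sub {s : ℝ} (hs : 2 ≤ s) :
    ConcaveOn ℝ (Ioc (1 / 2) (7 / 8)) fun b ↦ logGammaRatio b - logGammaRatio (s - b) := by
  have hreflect : ConvexOn ℝ (Ioc (1 / 2) (7 / 8))
      fun b ↦ logGammaRatio (s - b) + 1 / 2 * (s - b) ^ 2 :=
    (convexOn_logGammaRatio_add_sq.comp_affineMap (AffineMap.const ℝ ℝ s - AffineMap.id ℝ ℝ)).subset
      (fun b hb ↦ show 9 / 8 ≤ s - b by linarith [hb.2]) (convex_Ioc _ _)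
  have haffine : ConcaveOn ℝ (Ioc (1 / 2) (7 / 8)) fun b ↦ 1 / 2 * s ^ 2 - s * b :=
    (concaveOn_const _ (convex_Ioc _ _)).sub ((LinearMap.mulLeft ℝ s).convexOn (convex_Ioc _ _))
  refine ((concaveOn_logGammaRatio_add_sq.sub hreflect).add haffine).congr fun b _ ↦ ?_
  simp only [Pi.add_apply, Pi.sub_apply]
  ring

lemma exists_logGammaRatio_eq {s : ℝ} (hs : 2 ≤ s) :
    ∃ β ∈ Ioo (1 / 2 : ℝ) (7 / 8), logGammaRatio β = logGammaRatio (s - β) := by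
  have hcont {b : ℝ} (hb : b < s - 1 / 2) : ContinuousAt (fun b ↦ logGammaRatio (s - b)) b :=
    (continuousAt_logGammaRatio (by linarith)).comp' (by fun_prop)
  have hbot : Tendsto (fun b ↦ logGammaRatio b - logGammaRatio (s - b)) (𝓝[>] (1 / 2)) atBot :=
    tendsto_logGammaRatio_nhdsGT.atBot_add
      ((hcont (by linarith)).neg.mono_left nhdsWithin_le_nhds)
  obtain ⟨u, hneg, hu⟩ := ((hbot.eventually_lt_atBot 0).and
    (Ioo_mem_nhdsGT (by norm_num : (1 / 2 : ℝ) < 7 / 8))).exists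
  have hpos : 0 < logGammaRatio (7 / 8) - logGammaRatio (s - 7 / 8) :=
    sub_pos.2 (logGammaRatio_strictAntiOn self_mem_Ici (mem_Ici.2 (by linarith)) (by linarith))
  have hIcc : ContinuousOn (fun b ↦ logGammaRatio b - logGammaRatio (s - b)) (Icc u (7 / 8)) :=
    fun b hb ↦ ((continuousAt_logGammaRatio (hu.1.trans_le hb.1)).sub
      (hcont (by linarith [hb.2]))).continuousWithinAt
  obtain ⟨β, hβ, hzero⟩ := intermediate_value_Ioo hu.2.le hIcc ⟨hneg, hpos⟩
  exact ⟨β, ⟨hu.1.trans hβ.1, hβ.2⟩, sub_eq_zero.1 hzero⟩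

lemma exists_logGammaRatio_lt_iff {s : ℝ} (hs : 2 ≤ s) :
    ∃ β ∈ Ioo (1 / 2 : ℝ) (7 / 8), ∀ b ∈ Ioo (1 / 2) (s / 2),
      (logGammaRatio (s - b) < logGammaRatio b ↔ β < b) := by
  obtain ⟨β, hβ, hβ_eq⟩ := exists_logGammaRatio_eq hs
  refine ⟨β, hβ, fun b ⟨hb, hbs⟩ ↦ ?_⟩
  have hpos {x : ℝ} (hx : 7 / 8 ≤ x) (hxs : x < s / 2) :
      logGammaRatio (s - x) < logGammaRatio x :=
    logGammaRatio_strictAntiOn hx (mem_Ici.2 (by linarith)) (by linarith)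
  rcases le_total (7 / 8) b with hb' | hb'
  · exact iff_of_true (hpos hb' hbs) (hβ.2.trans_le hb')
  · rw [← sub_pos]
    exact pos_iff_lt_of_concaveOn (concaveOn_logGammaRatio_sub hs) (Ioo_subset_Ioc_self hβ)
      ⟨by norm_num, le_rfl⟩ ⟨hb, hb'⟩ hβ.2 hb' (sub_eq_zero.2 hβ_eq)
      (sub_pos.2 (hpos le_rfl (by linarith)))

/-- The point of `(1/2, 7/8)` where `b ↦ logGammaRatio b - logGammaRatio (s - b)` changes sign from
negative to positive, meaningful for `s ≥ 2`. It is encoded as the infimum of the `b < s / 2` at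
which the difference is positive. -/
noncomputable def crossing (s : ℝ) : ℝ :=
  sInf {b ∈ Ioo (1 / 2) (s / 2) | logGammaRatio (s - b) < logGammaRatio b}

lemma crossing_spec {s : ℝ} (hs : 2 ≤ s) :
    crossing s ∈ Ioo (1 / 2 : ℝ) (7 / 8) ∧ ∀ b ∈ Ioo (1 / 2) (s / 2),
      (logGammaRatio (s - b) < logGammaRatio b ↔ crossing s < b) := by
  obtain ⟨β, hβ, hiff⟩ := exists_logGammaRatio_lt_iff hs
  have hset : {b ∈ Ioo (1 / 2) (s / 2) | logGammaRatio (s - b) < logGammaRatio b} =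
      Ioo β (s / 2) := by
    ext b
    exact ⟨fun ⟨hb, h⟩ ↦ ⟨(hiff b hb).1 h, hb.2⟩,
      fun hb ↦ ⟨⟨hβ.1.trans hb.1, hb.2⟩, (hiff b ⟨hβ.1.trans hb.1, hb.2⟩).2 hb.1⟩⟩
  have heq : crossing s = β := by rw [crossing, hset, csInf_Ioo (by linarith [hβ.2])]
  exact heq ▸ ⟨hβ, hiff⟩

lemma antitoneOn_crossing : AntitoneOn crossing (Ici 2) := by
  intro s hs t ht hst
  rw [mem_Ici] at hs ht
  obtain ⟨hβs, hiff_s⟩ := crossing_spec hs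
  obtain ⟨hβt, hiff_t⟩ := crossing_spec ht
  refine le_of_forall_gt_imp_ge_of_dense fun b hb ↦ ?_
  rcases le_or_gt (7 / 8) b with hb' | hb'
  · exact hβt.2.le.trans hb'
  · have hcross := (hiff_s b ⟨hβs.1.trans hb, by linarith⟩).2 hb
    have hmono : logGammaRatio (t - b) ≤ logGammaRatio (s - b) :=
      logGammaRatio_strictAntiOn.antitoneOn (mem_Ici.2 (by linarith)) (mem_Ici.2 (by linarith))
        (by linarith)
    exact ((hiff_t b ⟨hβs.1.trans hb, by linarith⟩).1 (hmono.trans_lt hcross)).le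

lemma tendsto_crossing : Tendsto crossing atTop (𝓝 (1 / 2)) := by
  refine tendsto_order.2 ⟨fun a ha ↦ ?_, fun a ha ↦ ?_⟩
  · filter_upwards [eventually_ge_atTop 2] with s hs using ha.trans (crossing_spec hs).1.1
  · obtain ⟨b, hb, hb'⟩ := exists_between (lt_min ha (by norm_num : (1 / 2 : ℝ) < 7 / 8))
    have hsmall : ∀ᶠ s in atTop, logGammaRatio (s - b) < logGammaRatio b :=
      (tendsto_logGammaRatio_atTop.comp
        (tendsto_atTop_add_const_right _ (-b) tendsto_id)).eventually_lt_atBot _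
    filter_upwards [hsmall, eventually_ge_atTop 2] with s hlt hs
    have hbs : b < s / 2 := by linarith [hb'.trans_le (min_le_right _ _)]
    exact (((crossing_spec hs).2 b ⟨hb, hbs⟩).1 hlt).trans (hb'.trans_le (min_le_left _ _))

end Crossing

section Curvature

variable {n : ℤ} {γ a b : ℝ} (ha : n + 2 * γ = 4 * a) (hb : n - 2 * γ = 4 * b)

include ha hb

lemma Xi_eq : Xi n γ = 4 ^ γ * Gamma (a - 1 / 4) ^ 2 / Gamma (b - 1 / 4) ^ 2 := by
  have e₁ : (n : ℝ) / 4 + γ / 2 - 1 / 4 = a - 1 / 4 := by linarith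
  have e₂ : (n : ℝ) / 4 - γ / 2 - 1 / 4 = b - 1 / 4 := by linarith
  rw [Xi, e₁, e₂]

lemma Qcurv_eq : Qcurv n γ =
    4 ^ γ * Gamma a * Gamma (a - 1 / 2) / (Gamma b * Gamma (b - 1 / 2)) := by
  have e₁ : ((n : ℝ) + 2 * γ) / 4 = a := by linarith
  have e₂ : ((n : ℝ) - 2 + 2 * γ) / 4 = a - 1 / 2 := by linarith
  have e₃ : ((n : ℝ) - 2 * γ) / 4 = b := by linarith
  have e₄ : ((n : ℝ) - 2 - 2 * γ) / 4 = b - 1 / 2 := by linarith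
  rw [Qcurv, e₁, e₂, e₃, e₄]

lemma mul_Qcurv_eq (ha₀ : a ≠ 0) (hb₀ : b ≠ 0) : (n + 2 * γ) / (n - 2 * γ) * Qcurv n γ =
    4 ^ γ * Gamma (a + 1) * Gamma (a - 1 / 2) / (Gamma (b + 1) * Gamma (b - 1 / 2)) := by
  rw [Qcurv_eq ha hb, ha, hb, Gamma_add_one ha₀, Gamma_add_one hb₀,
    mul_div_mul_left _ _ four_ne_zero, div_mul_div_comm]
  congr 1 <;> ring

lemma Xi_lt_mul_Qcurv_iff (ha₀ : 1 / 2 < a) (hb₀ : 1 / 2 < b) :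
    Xi n γ < (n + 2 * γ) / (n - 2 * γ) * Qcurv n γ ↔ logGammaRatio a < logGammaRatio b := by
  have hGamma {x c : ℝ} (hx : 1 / 2 < x) (hc : -(1 / 2) ≤ c) : 0 < Gamma (x + c) :=
    Gamma_pos_of_pos (by linarith)
  have := hGamma (c := 1) ha₀ (by norm_num)
  have ha₂ := hGamma (c := -(1 / 4)) ha₀ (by norm_num)
  have ha₃ := hGamma (c := -(1 / 2)) ha₀ le_rfl
  have := hGamma (c := 1) hb₀ (by norm_num)
  have hb₂ := hGamma (c := -(1 / 4)) hb₀ (by norm_num)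
  have hb₃ := hGamma (c := -(1 / 2)) hb₀ le_rfl
  simp only [← sub_eq_add_neg] at ha₂ ha₃ hb₂ hb₃
  rw [Xi_eq ha hb, mul_Qcurv_eq ha hb (by linarith) (by linarith),
    ← log_lt_log_iff (by positivity) (by positivity)]
  simp (disch := positivity) only [log_mul, log_div, log_pow]
  rw [logGammaRatio, logGammaRatio]
  push_cast
  constructor <;> intro h <;> linarith

end Curvature

theorem stmt16 :
    ∃ c : ℕ → ℝ,
      (∀ n : ℕ, 4 ≤ n →
        0 < c n ∧ c n < (n : ℝ) / 2 - 1 ∧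
        ∀ γ : ℝ, 0 < γ → γ < (n : ℝ) / 2 - 1 →
          (Xi (n : ℤ) γ < (((n : ℝ) + 2 * γ) / ((n : ℝ) - 2 * γ)) * Qcurv (n : ℤ) γ ↔
            γ < c n)) ∧
      (∀ n : ℕ, 4 ≤ n → c n < c (n + 1)) ∧
      Filter.Tendsto (fun n : ℕ => (n : ℝ) / 2 - 1 - c n) Filter.atTop (nhds 0) := by
  have two_le_half {n : ℕ} (hn : 4 ≤ n) : (2 : ℝ) ≤ n / 2 := by
    have : (4 : ℝ) ≤ n := mod_cast hn
    linarith
  refine ⟨fun n ↦ n / 2 - 2 * crossing (n / 2), fun n hn ↦ ?_, fun n hn ↦ ?_, ?_⟩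
  · obtain ⟨⟨hlower, hupper⟩, hiff⟩ := crossing_spec (two_le_half hn)
    refine ⟨by linarith [two_le_half hn], by linarith, fun γ hγ hγn ↦ ?_⟩
    have hcross := hiff (n / 4 - γ / 2) ⟨by linarith, by linarith⟩
    have hlt := Xi_lt_mul_Qcurv_iff (n := n) (γ := γ) (a := n / 2 - (n / 4 - γ / 2))
      (b := n / 4 - γ / 2) (by push_cast; ring) (by push_cast; ring) (by linarith) (by linarith)
    rw [Int.cast_natCast] at hlt
    rw [hlt, hcross]
    constructor <;> intro h <;> linarith
  · have hle := antitoneOn_crossing (two_le_half hn) (two_le_half (hn.trans n.le_succ))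
      (by gcongr; exact n.le_succ)
    push_cast at hle ⊢
    linarith
  · have hhalf : Tendsto (fun n : ℕ ↦ (n : ℝ) / 2) atTop atTop :=
      tendsto_natCast_atTop_atTop.atTop_div_const two_pos
    have hlim := ((tendsto_crossing.comp hhalf).const_mul 2).sub_const 1
    convert hlim using 2 with n
    · simp only [Function.comp_apply]; ring
    · norm_num
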